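/- Let D, d, d_e be natural numbers with 1 ≤ d_e, d_e ≤ d and d_e < D, let U be a D×d_e real matrix and V a D×(D−d_e) real matrix with UᵀU = I, VᵀV = I and UᵀV = 0, let p, x* ∈ ℝ^D with z* := Uᵀ(x* − p) ≠ 0, and let μ be the Gaussian matrix measure on D×d real matrices. Set m = D − d_e, n = d − d_e + 1, Δ = ‖z*‖, and for a matrix A set B = Uᵀ A, y₂*(A) = Bᵀ(B Bᵀ)⁻¹ z*, and w(A) = Vᵀ(A y₂*(A)) ∈ ℝ^m. Then the pushforward of μ under the map A ↦ ‖w(A)‖ equals the measure on ℝ with density h with respect to Lebesgue measure, where h(ŵ) = (2 Γ((m+n)/2) / (Γ(m/2) Γ(n/2))) · (ŵ^{m−1}/Δ^m) · (1 + ŵ²/Δ²)^{−(m+n)/2} for ŵ > 0, and h(ŵ) = 0 for ŵ ≤ 0. -/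

import Mathlib

/-! By rotation invariance, `B = Uᵀ A` and `C = Vᵀ A` are independent Gaussian matrices
(`map_stdM_prod`), and `w = C y` with `y = Bᵀ (B Bᵀ)⁻¹ z*`. Put `u = z* / Δ` and complete it to an
orthonormal basis `(u, Z)` of `ℝ^{d_e}`; then the row `b = Bᵀ u` and the matrix `B₂ = Zᵀ B` are again
independent and Gaussian. Almost surely `B₂` has full rank `d_e - 1` (`ae_linearIndependent`), so its
kernel has dimension `n = d - d_e + 1`; let the columns of `N` be an orthonormal basis of it. The
minimal-norm solution `y` is orthogonal to the rows of `B₂` and is therefore the multiple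
`(Δ / ‖Nᵀ b‖²) N Nᵀ b` (`minNorm_eq`), of norm `Δ / ‖Nᵀ b‖`.

Conditionally on `B₂`, the vector `Nᵀ b` is standard Gaussian in `ℝⁿ`. Conditionally on `B`, the
matrix `C` maps the unit vector `y / ‖y‖` to a standard Gaussian vector in `ℝᵐ` (`map_mulVec_stdM`).
So `‖w‖` has the law of `Δ χ_m / χ_n` with independent chi variables. Their densities come from
polar coordinates (`map_euclNorm_stdG`), and the density of the quotient from a Gamma integral
(`map_ratio_chi`). -/

open Matrix MeasureTheory ProbabilityTheory

/-- The Gaussian matrix measure on `D × d` real matrices: all entries i.i.d. `N(0,1)`. -/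
noncomputable def gaussMatrix (D d : ℕ) : Measure (Fin D → Fin d → ℝ) :=
  Measure.pi fun _ => Measure.pi fun _ => gaussianReal 0 1

/-- The Euclidean norm on `ℝ^k`. -/
noncomputable def euclNorm {k : ℕ} (y : Fin k → ℝ) : ℝ := Real.sqrt (∑ i, y i ^ 2)

/-! ### Rotation invariance of Gaussian matrices -/

/-- The standard Gaussian measure on `ℝ^ι`, as a product measure. -/
noncomputable abbrev stdG (ι : Type*) [Fintype ι] : Measure (ι → ℝ) :=
  Measure.pi fun _ => gaussianReal 0 1

/-- Rotation invariance: a coordinate projection `Eᵀ` with orthonormal directions sends the standard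
Gaussian to the standard Gaussian. Proved by comparing characteristic functions. -/
lemma map_stdG_of_isometry {ι κ : Type*} [Fintype ι] [Fintype κ] [DecidableEq κ]
    (E : Matrix ι κ ℝ) (hE : Eᵀ * E = 1) :
    (stdG ι).map (fun x => Eᵀ *ᵥ x) = stdG κ := by
  have hmeas : Measurable (fun x : ι → ℝ => Eᵀ *ᵥ x) := by fun_prop
  have key : ((stdG ι).map (fun x => Eᵀ *ᵥ x)).map (WithLp.toLp 2)
      = (stdG κ).map (WithLp.toLp 2) := by
    rw [map_pi_eq_stdGaussian, Measure.map_map (by fun_prop) hmeas]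
    have : IsProbabilityMeasure ((stdG ι).map (WithLp.toLp 2 ∘ fun x => Eᵀ *ᵥ x)) :=
      Measure.isProbabilityMeasure_map (by fun_prop)
    apply Measure.ext_of_charFun (E := EuclideanSpace ℝ κ)
    ext t
    have h1 : charFun ((stdG ι).map (WithLp.toLp 2 ∘ fun x => Eᵀ *ᵥ x)) t
        = charFun ((stdG ι).map (WithLp.toLp 2)) (WithLp.toLp 2 (E *ᵥ t.ofLp)) := by
      rw [charFun_apply, charFun_apply, integral_map (by fun_prop)
        (Measurable.aestronglyMeasurable (by fun_prop)), integral_map (by fun_prop)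
        (Measurable.aestronglyMeasurable (by fun_prop))]
      congr! 4 with x
      simp only [Function.comp, EuclideanSpace.inner_eq_star_dotProduct, star_trivial]
      rw [dotProduct_mulVec, vecMul_transpose, dotProduct_comm]
    rw [h1, map_pi_eq_stdGaussian, charFun_stdGaussian, charFun_stdGaussian]
    congr 3
    norm_cast
    simp only [EuclideanSpace.real_norm_sq_eq]
    have h2 : (E *ᵥ t.ofLp) ⬝ᵥ (E *ᵥ t.ofLp) = t.ofLp ⬝ᵥ t.ofLp := by
      rw [dotProduct_mulVec, ← mulVec_transpose, mulVec_mulVec, hE, one_mulVec]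
    simpa [dotProduct, sq] using h2
  exact (MeasurableEquiv.toLp 2 (κ → ℝ)).map_measurableEquiv_injective key

/-- Standard Gaussian measure on `ι × κ` matrices. -/
noncomputable abbrev stdM (ι κ : Type*) [Fintype ι] [Fintype κ] : Measure (ι → κ → ℝ) :=
  Measure.pi fun _ => stdG κ

lemma map_curry_stdG (ι κ : Type*) [Fintype ι] [Fintype κ] :
    (stdG (ι × κ)).map Function.curry = stdM ι κ := by
  have := Measure.infinitePi_map_curry (fun (_ : ι) (_ : κ) => gaussianReal 0 1)
  simp only [Measure.infinitePi_eq_pi] at this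
  exact this

/-- Matrix version of rotation invariance. Reading a matrix as a vector indexed by `ι × ν`, left
multiplication by `Eᵀ` is the vector map attached to the Kronecker product `E ⊗ 1`. -/
lemma map_stdM_of_isometry {ι κ ν : Type*} [Fintype ι] [Fintype κ] [Fintype ν] [DecidableEq κ]
    (E : Matrix ι κ ℝ) (hE : Eᵀ * E = 1) :
    (stdM ι ν).map (fun A => of.symm (Eᵀ * of A)) = stdM κ ν := by
  classical
  have h := map_stdG_of_isometry (ι := ι × ν) (κ := κ × ν) (kronecker E (1 : Matrix ν ν ℝ)) (by
    rw [kronecker, ← kroneckerMap_transpose, transpose_one,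
      ← mul_kronecker_mul, hE, Matrix.one_mul]
    simp)
  rw [← map_curry_stdG ι ν, ← map_curry_stdG κ ν, ← h, Measure.map_map _ measurable_curry,
    Measure.map_map measurable_curry (by fun_prop)]
  · congr 1
    ext x i j
    simp [Matrix.mul_apply, mulVec, dotProduct, Function.curry, Fintype.sum_prod_type, one_apply]
  · refine measurable_pi_lambda _ fun i => measurable_pi_lambda _ fun j => ?_
    change Measurable fun A : ι → ν → ℝ => ∑ k, Eᵀ i k * A k j
    fun_prop

/-! ### The chi distribution -/

lemma integrable_exp_neg_norm_sq (k : ℕ) :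
    Integrable (fun x : EuclideanSpace ℝ (Fin k) => Real.exp (-‖x‖ ^ 2 / 2)) := by
  have := (GaussianFourier.integrable_cexp_neg_mul_sq_norm_add (b := 1/2) (by norm_num) 0
    (0 : EuclideanSpace ℝ (Fin k))).re
  refine this.congr (Filter.Eventually.of_forall fun x => ?_)
  simp only [zero_mul, add_zero]
  have : (-(1/2 : ℂ) * (‖x‖ : ℂ) ^ 2) = ((-‖x‖ ^ 2 / 2 : ℝ) : ℂ) := by push_cast; ring
  rw [this]
  exact Complex.exp_ofReal_re _

/-- The Lebesgue density of the standard Gaussian on Euclidean space, identified through the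
characteristic function. -/
lemma stdGaussian_eq_withDensity (k : ℕ) :
    stdGaussian (EuclideanSpace ℝ (Fin k)) = volume.withDensity
      (fun x => ENNReal.ofReal ((2 * Real.pi) ^ (-(k : ℝ) / 2) * Real.exp (-‖x‖ ^ 2 / 2))) := by
  set c : ℝ := (2 * Real.pi) ^ (-(k : ℝ) / 2) with hc
  have hcpos : 0 < c := by positivity
  have hint := (integrable_exp_neg_norm_sq k).const_mul c
  have hfin : IsFiniteMeasure ((volume : Measure (EuclideanSpace ℝ (Fin k))).withDensity
      (fun x => ENNReal.ofReal (c * Real.exp (-‖x‖ ^ 2 / 2)))) :=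
    isFiniteMeasure_withDensity_ofReal hint.2
  apply Measure.ext_of_charFun
  ext t
  rw [charFun_stdGaussian, charFun_apply,
    integral_withDensity_eq_integral_toReal_smul (by fun_prop) (by simp)]
  have h := GaussianFourier.integral_cexp_neg_mul_sq_norm_add (b := 1/2) (by norm_num) Complex.I t
  have h2 : ∀ x : EuclideanSpace ℝ (Fin k), (ENNReal.ofReal (c * Real.exp (-‖x‖ ^ 2 / 2))).toReal •
      Complex.exp (inner ℝ x t * Complex.I) =
      c * Complex.exp (-(1/2) * ‖x‖ ^ 2 + Complex.I * inner ℝ t x) := by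
    intro x
    rw [ENNReal.toReal_ofReal (by positivity), Complex.exp_add, real_inner_comm, mul_comm Complex.I]
    rw [Complex.real_smul]
    push_cast
    ring_nf
  simp_rw [h2]
  rw [integral_const_mul, h]
  have h3 : (Real.pi / (1/2) : ℂ) = ((2 * Real.pi : ℝ) : ℂ) := by push_cast; ring
  rw [h3, hc, Complex.ofReal_cpow (by positivity), ← mul_assoc, ← Complex.cpow_add]
  · simp only [finrank_euclideanSpace, Fintype.card_fin]
    push_cast
    rw [neg_div (2 : ℂ) (k : ℂ), neg_add_cancel, Complex.cpow_zero, one_mul, Complex.I_sq]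
    congr 1; ring
  · norm_cast; positivity

/-- Density of the chi distribution with `k` degrees of freedom, extended by `0` to `t ≤ 0`. -/
noncomputable def chiDens (k : ℕ) (t : ℝ) : ℝ :=
  if 0 < t then 2 ^ (1 - (k : ℝ) / 2) / Real.Gamma ((k : ℝ) / 2) *
    (t ^ (k - 1) * Real.exp (-t ^ 2 / 2)) else 0

@[fun_prop]
lemma measurable_chiDens (k : ℕ) : Measurable (chiDens k) := by
  unfold chiDens
  exact Measurable.ite measurableSet_Ioi (by fun_prop) (by fun_prop)

lemma chiDens_nonneg (k : ℕ) (t : ℝ) : 0 ≤ chiDens k t := by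
  unfold chiDens
  split_ifs
  · have : 0 ≤ Real.Gamma ((k : ℝ) / 2) := Real.Gamma_nonneg_of_nonneg (by positivity)
    positivity
  · rfl

lemma measurable_euclNorm {k : ℕ} : Measurable (euclNorm (k := k)) := by
  unfold euclNorm; fun_prop

/-- The norm of a standard Gaussian vector is chi distributed: polar coordinates, with the surface
constant supplied by the volume of the Euclidean unit ball. -/
lemma map_euclNorm_stdG (k : ℕ) (hk : 1 ≤ k) :
    (stdG (Fin k)).map euclNorm = volume.withDensity (fun t => ENNReal.ofReal (chiDens k t)) := by
  have : Nonempty (Fin k) := ⟨⟨0, hk⟩⟩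
  have : Nontrivial (EuclideanSpace ℝ (Fin k)) := by
    apply Module.nontrivial_of_finrank_pos (R := ℝ); simp; omega
  set c : ℝ := (2 * Real.pi) ^ (-(k : ℝ) / 2) with hc
  have hcpos : 0 < c := by positivity
  have h0 : (stdG (Fin k)).map euclNorm
      = (stdGaussian (EuclideanSpace ℝ (Fin k))).map (fun x => ‖x‖) := by
    rw [← map_pi_eq_stdGaussian, Measure.map_map (by fun_prop) (by fun_prop)]
    congr 1
    ext x
    simp [euclNorm, EuclideanSpace.norm_eq]
  have hgpos : 0 < Real.Gamma ((k : ℝ) / 2) := Real.Gamma_pos_of_pos (by positivity)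
  rw [h0]
  have hp : IsProbabilityMeasure ((stdGaussian (EuclideanSpace ℝ (Fin k))).map (fun x => ‖x‖)) :=
    Measure.isProbabilityMeasure_map (by fun_prop)
  ext S hS
  have hcd : Integrable (chiDens k) := by
    have := integrableOn_rpow_mul_exp_neg_mul_sq (b := 1/2) (by norm_num) (s := (k - 1 : ℕ))
      (by have : (0:ℝ) ≤ ((k-1 : ℕ) : ℝ) := by positivity
          linarith)
    have := (integrable_indicator_iff measurableSet_Ioi).2 (this.const_mul
      (2 ^ (1 - (k : ℝ) / 2) / Real.Gamma ((k : ℝ) / 2)))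
    refine this.congr (Filter.Eventually.of_forall fun x => ?_)
    simp only [Set.indicator, Set.mem_Ioi, chiDens, Real.rpow_natCast]
    ring_nf
  rw [Measure.map_apply (by fun_prop) hS, stdGaussian_eq_withDensity, withDensity_apply _ hS,
    withDensity_apply _ ((by fun_prop : Measurable fun x : EuclideanSpace ℝ (Fin k) => ‖x‖) hS)]
  have hgi := (integrable_exp_neg_norm_sq k).const_mul c
  rw [← ofReal_integral_eq_lintegral_ofReal hgi.integrableOn
      (Filter.Eventually.of_forall fun x => by positivity),
    ← ofReal_integral_eq_lintegral_ofReal hcd.integrableOn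
      (Filter.Eventually.of_forall fun x => chiDens_nonneg k x)]
  congr 1
  rw [← integral_indicator hS, ← integral_indicator ((by fun_prop : Measurable fun x : EuclideanSpace ℝ (Fin k) => ‖x‖) hS)]
  have e1 := integral_fun_norm_addHaar (volume : Measure (EuclideanSpace ℝ (Fin k)))
    (S.indicator fun r => c * Real.exp (-r ^ 2 / 2))
  have e2 : ∀ x : EuclideanSpace ℝ (Fin k), ((fun x => ‖x‖) ⁻¹' S).indicator
      (fun x : EuclideanSpace ℝ (Fin k) => c * Real.exp (-‖x‖ ^ 2 / 2)) x =
      (S.indicator fun r => c * Real.exp (-r ^ 2 / 2)) ‖x‖ := fun x => rfl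
  simp_rw [e2]
  rw [e1, ← integral_indicator measurableSet_Ioi, nsmul_eq_mul, smul_eq_mul, ← integral_const_mul,
    ← integral_const_mul]
  congr 1
  ext r
  simp only [Set.indicator, chiDens, Set.mem_Ioi]
  by_cases hr : 0 < r <;> by_cases hrS : r ∈ S <;> simp only [hr, hrS, if_true, if_false, smul_zero,
    mul_zero]
  rw [measureReal_def, EuclideanSpace.volume_ball]
  simp only [finrank_euclideanSpace, Fintype.card_fin, ENNReal.ofReal_one, one_pow, one_mul, smul_eq_mul]
  have hk0 : (k : ℝ) / 2 ≠ 0 := by positivity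
  rw [ENNReal.toReal_ofReal (by have := Real.Gamma_pos_of_pos (s := (k:ℝ)/2+1) (by positivity); positivity),
    Real.Gamma_add_one hk0, hc]
  have e3 : (2 * Real.pi) ^ (-(k : ℝ) / 2) = 2 ^ (1 - (k : ℝ) / 2) / 2 / √Real.pi ^ k := by
    rw [neg_div, Real.rpow_neg (by positivity), Real.mul_rpow (by norm_num) (by positivity),
      Real.rpow_sub (by norm_num), Real.sqrt_eq_rpow, ← Real.rpow_natCast, ← Real.rpow_mul (by positivity)]
    rw [show (1 / 2 * (k : ℝ)) = k / 2 by ring]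
    field_simp
    simp
  rw [e3]
  have : (k : ℝ) ≠ 0 := by positivity
  field_simp

/-! ### The ratio of two independent chi variables -/

/-- The density on `r > 0` of `Δ · χ_m / χ_n` with independent chi variables. -/
noncomputable def ratioDens (m n : ℕ) (Δ r : ℝ) : ℝ :=
  (2 * Real.Gamma (((m : ℝ) + n) / 2) /
      (Real.Gamma ((m : ℝ) / 2) * Real.Gamma ((n : ℝ) / 2))) *
    (r ^ (m - 1) / Δ ^ m) *
    (1 + r ^ 2 / Δ ^ 2) ^ (-(((m : ℝ) + n) / 2))

/-- Integrating out the denominator `t`: the factor `t / Δ` is the Jacobian of `r ↦ (t / Δ) r`, and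
what remains is a Gamma integral. -/
lemma lintegral_chiDens_mul (m n : ℕ) (hm : 1 ≤ m) (hn : 1 ≤ n) (Δ : ℝ) (hΔ : 0 < Δ) (r : ℝ) :
    ∫⁻ t in Set.Ioi 0, ENNReal.ofReal (chiDens n t) *
      (ENNReal.ofReal (t / Δ) * ENNReal.ofReal (chiDens m (t / Δ * r))) =
      if 0 < r then ENNReal.ofReal (ratioDens m n Δ r) else 0 := by
  split_ifs with hr
  swap
  · rw [setLIntegral_congr_fun measurableSet_Ioi (g := fun _ => 0), lintegral_zero]
    intro t ht
    have ht : 0 < t := ht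
    have : ¬ 0 < t / Δ * r := by
      have h0 : 0 < t / Δ := by positivity
      rw [mul_pos_iff_of_pos_left h0]; exact hr
    simp [chiDens, this]
  have hGm : 0 < Real.Gamma ((m : ℝ) / 2) := Real.Gamma_pos_of_pos (by positivity)
  have hGn : 0 < Real.Gamma ((n : ℝ) / 2) := Real.Gamma_pos_of_pos (by positivity)
  set b : ℝ := (1 + r ^ 2 / Δ ^ 2) / 2 with hb
  have hbpos : 0 < b := by positivity
  set C : ℝ := 2 ^ (1 - (n : ℝ) / 2) / Real.Gamma ((n : ℝ) / 2) *
    (2 ^ (1 - (m : ℝ) / 2) / Real.Gamma ((m : ℝ) / 2)) * (r ^ (m - 1) / Δ ^ m) with hC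
  have hCpos : 0 < C := by positivity
  have hq : (-1 : ℝ) < (m : ℝ) + n - 1 := by
    have : (1:ℝ) ≤ m := by exact_mod_cast hm
    have : (1:ℝ) ≤ n := by exact_mod_cast hn
    linarith
  have hint := (integrableOn_rpow_mul_exp_neg_mul_rpow (p := 2) hq (by norm_num) hbpos).const_mul C
  have hpt : ∀ t ∈ Set.Ioi (0:ℝ), ENNReal.ofReal (chiDens n t) *
      (ENNReal.ofReal (t / Δ) * ENNReal.ofReal (chiDens m (t / Δ * r))) =
      ENNReal.ofReal (C * (t ^ ((m : ℝ) + n - 1) * Real.exp (-b * t ^ (2 : ℝ)))) := by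
    intro t ht
    have ht : 0 < t := ht
    have h1 : 0 < t / Δ * r := by positivity
    rw [← ENNReal.ofReal_mul (by positivity), ← ENNReal.ofReal_mul (chiDens_nonneg _ _)]
    congr 1
    simp only [chiDens, ht, h1, if_true]
    have e1 : t ^ ((m : ℝ) + n - 1) = t ^ (n - 1) * t * t ^ (m - 1) := by
      obtain ⟨m, rfl⟩ : ∃ k, m = k + 1 := ⟨m - 1, by omega⟩
      obtain ⟨n, rfl⟩ : ∃ k, n = k + 1 := ⟨n - 1, by omega⟩
      rw [show ((m + 1 : ℕ) : ℝ) + (n + 1 : ℕ) - 1 = ((n + 1 + m : ℕ) : ℝ) by push_cast; ring,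
        Real.rpow_natCast]
      simp only [Nat.add_sub_cancel]
      ring
    have e2 : Real.exp (-b * t ^ (2 : ℝ)) =
        Real.exp (-t ^ 2 / 2) * Real.exp (-(t / Δ * r) ^ 2 / 2) := by
      rw [← Real.exp_add, Real.rpow_two, hb]
      congr 1
      field_simp
      ring
    have e3 : Δ ^ m = Δ ^ (m - 1) * Δ := by rw [← pow_succ]; congr 1; omega
    rw [e1, e2, hC, mul_pow, div_pow, e3]
    field_simp
  rw [setLIntegral_congr_fun measurableSet_Ioi hpt,
    ← ofReal_integral_eq_lintegral_ofReal hint, integral_const_mul,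
    integral_rpow_mul_exp_neg_mul_rpow (by norm_num) hq hbpos]
  · congr 1
    rw [ratioDens, hC, hb, sub_add_cancel, neg_div, Real.div_rpow (by positivity) (by norm_num)]
    have e4 : (2:ℝ) ^ (-(((m : ℝ) + n) / 2)) = 2 ^ (1 - (n : ℝ) / 2) * 2 ^ (1 - (m : ℝ) / 2) / 4 := by
      rw [← Real.rpow_add (by norm_num), show (4:ℝ) = 2 ^ (2:ℝ) by norm_num,
        ← Real.rpow_sub (by norm_num)]
      congr 1; ring
    rw [e4]
    have : (0:ℝ) < 2 ^ (1 - (n : ℝ) / 2) := by positivity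
    have : (0:ℝ) < 2 ^ (1 - (m : ℝ) / 2) := by positivity
    field_simp
    norm_num
  · filter_upwards [ae_restrict_mem measurableSet_Ioi] with t ht
    have ht : 0 < t := ht
    positivity

/-- The law of `(Δ / t) s`, for `t` and `s` independent chi variables with `n` and `m` degrees of
freedom, has density `ratioDens m n Δ` on the positive half-line. -/
lemma map_ratio_chi (m n : ℕ) (hm : 1 ≤ m) (hn : 1 ≤ n) (Δ : ℝ) (hΔ : 0 < Δ) (S : Set ℝ)
    (hS : MeasurableSet S) :
    ∫⁻ t, ((stdG (Fin m)).map euclNorm) {s | Δ / t * s ∈ S} ∂((stdG (Fin n)).map euclNorm) =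
      (volume.withDensity fun r => if 0 < r then ENNReal.ofReal (ratioDens m n Δ r) else 0) S := by
  have hcm := (measurable_chiDens m).ennreal_ofReal
  have hcn := (measurable_chiDens n).ennreal_ofReal
  rw [map_euclNorm_stdG m hm, map_euclNorm_stdG n hn, lintegral_withDensity_eq_lintegral_mul₀' hcn.aemeasurable]
  swap
  · have : Measurable fun p : ℝ × ℝ => Δ / p.1 * p.2 := by fun_prop
    exact (measurable_measure_prodMk_left (this hS)).aemeasurable
  have h1 : ∀ t : ℝ, 0 < t → (volume.withDensity fun t => ENNReal.ofReal (chiDens m t))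
      {s | Δ / t * s ∈ S} = ∫⁻ r in S, ENNReal.ofReal (t / Δ) * ENNReal.ofReal (chiDens m (t / Δ * r)) := by
    intro t ht
    have hms : MeasurableSet {s | Δ / t * s ∈ S} := (measurable_const_mul (Δ / t)) hS
    have ha : t / Δ ≠ 0 := by positivity
    rw [withDensity_apply _ hms]
    conv_lhs => rw [← Real.smul_map_volume_mul_left ha]
    rw [Measure.restrict_smul,
      lintegral_smul_measure, Measure.restrict_map (by fun_prop) hms,
      lintegral_map hcm (by fun_prop), lintegral_const_mul _ (by fun_prop), abs_of_pos (by positivity)]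
    congr 3
    ext s
    simp only [Set.mem_preimage, Set.mem_ofPred_eq]
    rw [← mul_assoc, div_mul_div_cancel₀ (by positivity), div_self (by positivity), one_mul]
  have h2 : ∫⁻ t, ((fun t => ENNReal.ofReal (chiDens n t)) * fun t =>
      (volume.withDensity fun t => ENNReal.ofReal (chiDens m t)) {s | Δ / t * s ∈ S}) t =
      ∫⁻ t in Set.Ioi 0, ∫⁻ r in S, ENNReal.ofReal (chiDens n t) *
      (ENNReal.ofReal (t / Δ) * ENNReal.ofReal (chiDens m (t / Δ * r))) := by
    rw [← lintegral_indicator measurableSet_Ioi]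
    congr 1
    ext t
    by_cases ht : 0 < t
    · rw [Set.indicator_of_mem (by exact ht), Pi.mul_apply, h1 t ht, ← lintegral_const_mul]
      fun_prop
    · rw [Set.indicator_of_notMem (by exact ht), Pi.mul_apply]
      simp [chiDens, ht]
  rw [h2, withDensity_apply _ hS, lintegral_lintegral_swap]
  · congr 1
    ext r
    exact lintegral_chiDens_mul m n hm hn Δ hΔ r
  · have hcm' : Measurable fun p : ℝ × ℝ => chiDens m (p.1 / Δ * p.2) :=
      (measurable_chiDens m).comp (by fun_prop)
    have hcn' : Measurable fun p : ℝ × ℝ => chiDens n p.1 := (measurable_chiDens n).comp (by fun_prop)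
    simp only [Function.uncurry_def]
    fun_prop

/-! ### Almost sure rank, and images of unit vectors -/

/-- An orthonormal basis of the kernel of a full-rank `k × d` matrix, as the columns of `N`; the last
clause says that `N Nᵀ` is the identity on the kernel. -/
lemma exists_kernel_basis {k d : ℕ} (B : Matrix (Fin k) (Fin d) ℝ) (hB : LinearIndependent ℝ B) :
    ∃ N : Matrix (Fin d) (Fin (d - k)) ℝ, Nᵀ * N = 1 ∧ B * N = 0 ∧
      ∀ y, B *ᵥ y = 0 → N *ᵥ (Nᵀ *ᵥ y) = y := by
  set f : EuclideanSpace ℝ (Fin d) →ₗ[ℝ] (Fin k → ℝ) :=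
    B.mulVecLin ∘ₗ (WithLp.linearEquiv 2 ℝ (Fin d → ℝ)).toLinearMap with hf
  have hrank : Module.finrank ℝ (LinearMap.range f) = k := by
    rw [hf, LinearMap.range_comp_of_range_eq_top _ (LinearEquiv.range _)]
    have := LinearIndependent.rank_matrix (R := ℝ) (M := B) hB
    simpa [Matrix.rank] using this
  have hker : Module.finrank ℝ (LinearMap.ker f) = d - k := by
    have := LinearMap.finrank_range_add_finrank_ker f
    rw [hrank, finrank_euclideanSpace, Fintype.card_fin] at this
    omega
  let b := (stdOrthonormalBasis ℝ (LinearMap.ker f)).reindex (finCongr hker)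
  have hbmem : ∀ j, B *ᵥ (b j : EuclideanSpace ℝ (Fin d)).ofLp = 0 := fun j => (b j).2
  refine ⟨of fun i j => (b j : EuclideanSpace ℝ (Fin d)) i, ?_, ?_, ?_⟩
  · ext i j
    have := orthonormal_iff_ite.1 b.orthonormal i j
    rw [Submodule.coe_inner, EuclideanSpace.inner_eq_star_dotProduct] at this
    rw [Matrix.mul_apply, one_apply, ← this, dotProduct]
    refine Finset.sum_congr rfl fun x _ => ?_
    simp [mul_comm]
  · ext i j
    have := congrFun (hbmem j) i
    simpa [Matrix.mul_apply, mulVec, dotProduct] using this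
  · intro y hy
    have := b.sum_repr' ⟨WithLp.toLp 2 y, hy⟩
    have := congrArg (fun v : LinearMap.ker f => (v : EuclideanSpace ℝ (Fin d)).ofLp) this
    simp only at this
    conv_rhs => rw [← this]
    ext i
    simp [mulVec, dotProduct, EuclideanSpace.inner_eq_star_dotProduct, mul_comm]

lemma ae_stdG_ne_zero {k d : ℕ} (hkd : k < d) (N : Matrix (Fin d) (Fin (d - k)) ℝ)
    (hN : Nᵀ * N = 1) : ∀ᵐ x ∂(stdG (Fin d)), Nᵀ *ᵥ x ≠ 0 := by
  have : Nonempty (Fin (d - k)) := ⟨⟨0, by omega⟩⟩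
  have hna : NullSingletonClass (gaussianReal 0 1) := nullSingletonClass_gaussianReal (by norm_num)
  have h : ∀ᵐ v ∂(stdG (Fin (d - k))), v ≠ 0 := by
    rw [ae_iff]
    simp only [ne_eq, not_not, Set.ofPred_eq_eq_singleton]
    exact measure_singleton 0
  rw [← map_stdG_of_isometry N hN] at h
  exact ae_of_ae_map (f := fun x => Nᵀ *ᵥ x) (p := fun v => v ≠ 0) (by fun_prop) h

/-- A Gaussian matrix with at least as many columns as rows almost surely has full row rank. By
induction: given `k` independent rows, the next row is a.s. not orthogonal to their kernel, so it is
not in their span. -/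
lemma ae_linearIndependent (d : ℕ) : ∀ k : ℕ, k ≤ d →
    ∀ᵐ B ∂(stdM (Fin k) (Fin d)), LinearIndependent ℝ B := by
  intro k
  induction k with
  | zero => exact fun _ => Filter.Eventually.of_forall fun B => linearIndependent_empty_type
  | succ k ih =>
    intro hk
    have mp := measurePreserving_piFinSuccAbove (fun _ : Fin (k + 1) => stdG (Fin d)) 0
    have hmeas : MeasurableSet {p : (Fin d → ℝ) × (Fin k → Fin d → ℝ) |
        LinearIndependent ℝ (Fin.cons p.1 p.2 : Fin (k + 1) → Fin d → ℝ)} := by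
      have hc : Continuous fun p : (Fin d → ℝ) × (Fin k → Fin d → ℝ) =>
          (Fin.cons p.1 p.2 : Fin (k + 1) → Fin d → ℝ) := by
        refine continuous_pi fun i => ?_
        refine Fin.cases ?_ (fun j => ?_) i
        · simp only [Fin.cons_zero]; fun_prop
        · simp only [Fin.cons_succ]; fun_prop
      exact (isOpen_setOfPred_linearIndependent.preimage hc).measurableSet
    have h : ∀ᵐ p ∂((stdG (Fin d)).prod (stdM (Fin k) (Fin d))),
        LinearIndependent ℝ (Fin.cons p.1 p.2 : Fin (k + 1) → Fin d → ℝ) := by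
      rw [Measure.ae_prod_iff_ae_ae hmeas, Measure.ae_ae_comm hmeas]
      filter_upwards [ih (by omega)] with B hB
      obtain ⟨N, hN1, hN2, -⟩ := exists_kernel_basis B hB
      filter_upwards [ae_stdG_ne_zero (by omega) N hN1] with x hx
      refine linearIndependent_finCons.2 ⟨hB, fun hmem => hx ?_⟩
      have hle : Submodule.span ℝ (Set.range B) ≤ LinearMap.ker Nᵀ.mulVecLin := by
        rw [Submodule.span_le]
        rintro _ ⟨i, rfl⟩
        ext j
        have : ∑ x, B i x * N x j = 0 := congrFun (congrFun hN2 i) j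
        change ∑ x, N x j * B i x = 0
        simp_rw [mul_comm (N _ _)]
        exact this
      exact hle hmem
    have h2 := mp.quasiMeasurePreserving.ae h
    filter_upwards [h2] with B hB
    convert! hB using 1
    ext i
    refine Fin.cases ?_ (fun j => ?_) i <;>
      simp [MeasurableEquiv.piFinSuccAbove]
    rfl

/-- The image of a fixed unit vector under a Gaussian matrix is a standard Gaussian vector. -/
lemma map_mulVec_stdM {m d : ℕ} (e : Fin d → ℝ) (he : e ⬝ᵥ e = 1) :
    (stdM (Fin m) (Fin d)).map (fun C => of C *ᵥ e) = stdG (Fin m) := by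
  have h1 : (stdG (Fin d)).map (fun x => x ⬝ᵥ e) = gaussianReal 0 1 := by
    have h := map_stdG_of_isometry (κ := Unit) (replicateCol Unit e) (by
      ext i j
      simpa [Matrix.mul_apply, dotProduct] using he)
    have h' := congrArg (Measure.map (fun x : Unit → ℝ => x ())) h
    rw [Measure.map_map (by fun_prop) (by fun_prop)] at h'
    rw [(measurePreserving_eval (fun _ : Unit => gaussianReal 0 1) ()).map_eq] at h'
    rw [← h']
    congr 1
    ext x
    simp [mulVec, dotProduct, mul_comm]
  have hm : Measurable fun x : Fin d → ℝ => x ⬝ᵥ e := by simp only [dotProduct]; fun_prop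
  have : ∀ i : Fin m, SigmaFinite ((stdG (Fin d)).map (fun x => x ⬝ᵥ e)) := fun i => by
    rw [h1]; infer_instance
  have h2 := Measure.pi_map_pi (μ := fun _ : Fin m => stdG (Fin d)) (f := fun _ x => x ⬝ᵥ e)
    (fun i => hm.aemeasurable)
  simp only [h1] at h2
  exact h2

/-! ### The minimal-norm solution -/

lemma euclNorm_sq {k : ℕ} (y : Fin k → ℝ) : euclNorm y ^ 2 = y ⬝ᵥ y := by
  rw [euclNorm, Real.sq_sqrt (by positivity)]
  simp [dotProduct, sq]

lemma euclNorm_smul {k : ℕ} (a : ℝ) (ha : 0 ≤ a) (y : Fin k → ℝ) :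
    euclNorm (a • y) = a * euclNorm y := by
  simp only [euclNorm, Pi.smul_apply, smul_eq_mul, mul_pow, ← Finset.mul_sum]
  rw [Real.sqrt_mul (by positivity), Real.sqrt_sq ha]

lemma euclNorm_pos {k : ℕ} {y : Fin k → ℝ} (hy : y ≠ 0) : 0 < euclNorm y := by
  have h0 : 0 ≤ euclNorm y := Real.sqrt_nonneg _
  refine lt_of_le_of_ne h0 fun h => hy ?_
  have := euclNorm_sq y
  rw [← h] at this
  exact dotProduct_self_eq_zero.1 (by simpa using this.symm)

/-- The minimal-norm solution of `B y = Δ u`. In the orthonormal basis `(u, Z)` of the target the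
equations read `(Zᵀ B) y = 0` and `⟨Bᵀ u, y⟩ = Δ`. As `y` lies in the row space of `B`,
which is spanned by `Bᵀ u` and the rows of `Zᵀ B`, its projection to the kernel of `Zᵀ B`, namely `y`
itself, is a multiple of that of `Bᵀ u`; the last equation fixes the factor. -/
lemma minNorm_eq {q k d n : ℕ} (u : Fin q → ℝ) (hu : u ⬝ᵥ u = 1)
    (Z : Matrix (Fin q) (Fin k) ℝ) (hZu : Zᵀ *ᵥ u = 0)
    (hdec : ∀ c, c = (u ⬝ᵥ c) • u + Z *ᵥ (Zᵀ *ᵥ c))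
    (B : Matrix (Fin q) (Fin d) ℝ) (hLI : LinearIndependent ℝ (Zᵀ * B))
    (N : Matrix (Fin d) (Fin n) ℝ) (hBN : Zᵀ * B * N = 0)
    (hproj : ∀ y, (Zᵀ * B) *ᵥ y = 0 → N *ᵥ (Nᵀ *ᵥ y) = y)
    (hne : Nᵀ *ᵥ (Bᵀ *ᵥ u) ≠ 0) (Δ : ℝ) :
    Bᵀ *ᵥ ((B * Bᵀ)⁻¹ *ᵥ (Δ • u)) =
      (Δ / euclNorm (Nᵀ *ᵥ (Bᵀ *ᵥ u)) ^ 2) • (N *ᵥ (Nᵀ *ᵥ (Bᵀ *ᵥ u))) := by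
  set h := Nᵀ *ᵥ (Bᵀ *ᵥ u) with hh
  have hNBZ : Nᵀ * Bᵀ * Z = 0 := by
    have := congrArg transpose hBN
    simpa [transpose_mul, Matrix.mul_assoc] using this
  have hNB : ∀ c, Nᵀ *ᵥ (Bᵀ *ᵥ c) = (u ⬝ᵥ c) • h := by
    intro c
    conv_lhs => rw [hdec c]
    rw [mulVec_add, mulVec_add, mulVec_smul, mulVec_smul]
    have : Nᵀ *ᵥ (Bᵀ *ᵥ (Z *ᵥ (Zᵀ *ᵥ c))) = 0 := by
      rw [mulVec_mulVec, mulVec_mulVec, hNBZ, zero_mulVec]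
    rw [this, add_zero]
  -- A kernel vector `c` of `B Bᵀ` satisfies `Bᵀ c = 0`; applying `Nᵀ` kills its `u`-component, and
  -- the independence of the rows of `Zᵀ B` kills the rest.
  have hunit : IsUnit (B * Bᵀ).det := by
    rw [isUnit_iff_ne_zero]
    intro hdet
    obtain ⟨c, hc0, hc⟩ := exists_mulVec_eq_zero_iff.2 hdet
    have h1 : Bᵀ *ᵥ c = 0 := by
      apply dotProduct_self_eq_zero.1
      rw [dotProduct_mulVec, vecMul_transpose, mulVec_mulVec, hc, zero_dotProduct]
    have h2 : u ⬝ᵥ c = 0 := by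
      have := hNB c
      rw [h1, mulVec_zero] at this
      exact (smul_eq_zero.1 this.symm).resolve_right hne
    have h3 : c = Z *ᵥ (Zᵀ *ᵥ c) := by
      conv_lhs => rw [hdec c]
      rw [h2, zero_smul, zero_add]
    have h4 : (Zᵀ *ᵥ c) ᵥ* (Zᵀ * B) = 0 := by
      rw [← mulVec_transpose, transpose_mul, transpose_transpose, ← mulVec_mulVec, ← h3, h1]
    have h5 : Zᵀ *ᵥ c = 0 := by
      apply vecMul_injective_iff.2 hLI
      change (Zᵀ *ᵥ c) ᵥ* (Zᵀ * B) = 0 ᵥ* (Zᵀ * B)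
      rw [zero_vecMul]; exact h4
    exact hc0 (by rw [h3, h5, mulVec_zero])
  set c := (B * Bᵀ)⁻¹ *ᵥ (Δ • u) with hc
  have hy : B *ᵥ (Bᵀ *ᵥ c) = Δ • u := by
    rw [mulVec_mulVec, hc, mulVec_mulVec, mul_nonsing_inv _ hunit, one_mulVec]
  have hyN : Bᵀ *ᵥ c = (u ⬝ᵥ c) • (N *ᵥ h) := by
    rw [← mulVec_smul, ← hNB]
    refine (hproj _ ?_).symm
    rw [← mulVec_mulVec, hy, mulVec_smul, hZu, smul_zero]
  have hα : (u ⬝ᵥ c) * (h ⬝ᵥ h) = Δ := by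
    have h1 : u ⬝ᵥ (B *ᵥ (Bᵀ *ᵥ c)) = Δ := by rw [hy, dotProduct_smul, hu, smul_eq_mul, mul_one]
    rw [hyN, mulVec_smul, dotProduct_smul, smul_eq_mul] at h1
    rw [← h1]
    congr 1
    rw [dotProduct_mulVec, ← mulVec_transpose, dotProduct_mulVec, ← mulVec_transpose,
      transpose_transpose, transpose_transpose, dotProduct_comm]
  have hpos : h ⬝ᵥ h ≠ 0 := fun h0 => hne (dotProduct_self_eq_zero.1 h0)
  rw [euclNorm_sq, hyN]
  congr 1
  field_simp
  exact hα

/-! ### Independent blocks and the law given one of them -/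

lemma measurable_of_symm_mul {ι κ ν : Type*} [Fintype ι] [Fintype κ] [Fintype ν]
    (E : Matrix κ ι ℝ) : Measurable fun A : ι → ν → ℝ => (of.symm (E * of A) : κ → ν → ℝ) := by
  refine measurable_pi_lambda _ fun i => measurable_pi_lambda _ fun j => ?_
  change Measurable fun A : ι → ν → ℝ => ∑ k, E i k * A k j
  fun_prop

/-- Projections of a Gaussian matrix to two orthogonal families of directions are independent Gaussian
matrices. -/
lemma map_stdM_prod {ι κ κ' ν : Type*} [Fintype ι] [Fintype κ] [Fintype κ'] [Fintype ν]
    [DecidableEq κ] [DecidableEq κ']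
    (E : Matrix ι κ ℝ) (F : Matrix ι κ' ℝ) (hE : Eᵀ * E = 1) (hF : Fᵀ * F = 1)
    (hEF : Eᵀ * F = 0) :
    (stdM ι ν).map (fun A => ((of.symm (Eᵀ * of A) : κ → ν → ℝ),
      (of.symm (Fᵀ * of A) : κ' → ν → ℝ))) = (stdM κ ν).prod (stdM κ' ν) := by
  have hFE : Fᵀ * E = 0 := by
    have := congrArg transpose hEF
    simpa [transpose_mul] using this
  have hW : (fromCols E F)ᵀ * fromCols E F = 1 := by
    rw [transpose_fromCols, fromRows_mul_fromCols, hE, hF, hEF, hFE, fromBlocks_one]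
  have h := map_stdM_of_isometry (ν := ν) (fromCols E F) hW
  have mp := measurePreserving_sumPiEquivProdPi (fun _ : κ ⊕ κ' => stdG ν)
  have h2 : (stdM (κ ⊕ κ') ν).map (MeasurableEquiv.sumPiEquivProdPi fun _ => ν → ℝ) =
      (stdM κ ν).prod (stdM κ' ν) := mp.map_eq
  rw [← h, Measure.map_map mp.measurable (measurable_of_symm_mul _)] at h2
  exact h2

/-- `C y` for the vector `y = Bᵀ (B Bᵀ)⁻¹ z`, which is the minimal-norm solution of `B y = z` when
`B Bᵀ` is invertible. -/
noncomputable def minNormImage {q m d : ℕ} (z : Fin q → ℝ) (B : Fin q → Fin d → ℝ)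
    (C : Fin m → Fin d → ℝ) : Fin m → ℝ :=
  of C *ᵥ ((of B)ᵀ *ᵥ ((of B * (of B)ᵀ)⁻¹ *ᵥ z))

/-- The inverse is the adjugate divided by the determinant, so measurability survives at singular
`B Bᵀ` as well. -/
lemma measurable_minNormImage {q m d : ℕ} (z : Fin q → ℝ) :
    Measurable fun p : (Fin q → Fin d → ℝ) × (Fin m → Fin d → ℝ) => minNormImage z p.1 p.2 := by
  have hB : Continuous fun p : (Fin q → Fin d → ℝ) × (Fin m → Fin d → ℝ) =>
      (of p.1 : Matrix _ _ ℝ) := continuous_fst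
  have hC : Continuous fun p : (Fin q → Fin d → ℝ) × (Fin m → Fin d → ℝ) =>
      (of p.2 : Matrix _ _ ℝ) := continuous_snd
  have hM := hB.matrix_mul hB.matrix_transpose
  have h1 : Continuous fun p : (Fin q → Fin d → ℝ) × (Fin m → Fin d → ℝ) =>
      of p.2 *ᵥ ((of p.1)ᵀ *ᵥ ((of p.1 * (of p.1)ᵀ).adjugate *ᵥ z)) :=
    hC.matrix_mulVec (hB.matrix_transpose.matrix_mulVec
      (hM.matrix_adjugate.matrix_mulVec continuous_const))
  have h2 := hM.matrix_det.measurable.inv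
  have : (fun p : (Fin q → Fin d → ℝ) × (Fin m → Fin d → ℝ) => minNormImage z p.1 p.2) =
      fun p => (of p.1 * (of p.1)ᵀ).det⁻¹ •
        (of p.2 *ᵥ ((of p.1)ᵀ *ᵥ ((of p.1 * (of p.1)ᵀ).adjugate *ᵥ z))) := by
    ext1 p
    rw [minNormImage, inv_def, Ring.inverse_eq_inv', smul_mulVec, mulVec_smul, mulVec_smul]
  rw [this]
  exact h2.smul h1.measurable

/-- With the part `B₂` of `B` orthogonal to `u` fixed, averaging over the row `b` and over `C` gives
the law of `(Δ / χ_n) χ_m`: the solution has norm `Δ / ‖Nᵀ b‖` and `C` sends its direction to a standard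
Gaussian vector. -/
lemma lintegral_minNormImage {q k d n m : ℕ} (hkn : n = d - k) (hn : 1 ≤ n)
    (u : Fin q → ℝ) (hu : u ⬝ᵥ u = 1)
    (Z : Matrix (Fin q) (Fin k) ℝ) (hZ : Zᵀ * Z = 1) (hZu : Zᵀ *ᵥ u = 0)
    (hdec : ∀ c, c = (u ⬝ᵥ c) • u + Z *ᵥ (Zᵀ *ᵥ c)) (Δ : ℝ) (hΔ : 0 < Δ)
    (S : Set ℝ) (hS : MeasurableSet S)
    (B₂ : Matrix (Fin k) (Fin d) ℝ) (hB₂ : LinearIndependent ℝ B₂) :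
    ∫⁻ b, stdM (Fin m) (Fin d)
        {C | euclNorm (minNormImage (Δ • u) (vecMulVec u b + Z * B₂) C) ∈ S} ∂(stdG (Fin d)) =
      ∫⁻ t, ((stdG (Fin m)).map euclNorm) {s | Δ / t * s ∈ S} ∂((stdG (Fin n)).map euclNorm) := by
  subst hkn
  obtain ⟨N, hN1, hN2, hN3⟩ := exists_kernel_basis B₂ hB₂
  have hpt : ∀ b : Fin d → ℝ, Nᵀ *ᵥ b ≠ 0 → stdM (Fin m) (Fin d)
        {C | euclNorm (minNormImage (Δ • u) (vecMulVec u b + Z * B₂) C) ∈ S} =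
      ((stdG (Fin m)).map euclNorm) {s | Δ / euclNorm (Nᵀ *ᵥ b) * s ∈ S} := by
    intro b hb
    set B : Matrix (Fin q) (Fin d) ℝ := vecMulVec u b + Z * B₂ with hB
    have hBu : Bᵀ *ᵥ u = b := by
      rw [hB, transpose_add, transpose_vecMulVec, transpose_mul, add_mulVec, ← mulVec_mulVec, hZu,
        mulVec_zero, add_zero, vecMulVec_mulVec, hu]
      simp
    have hZB : Zᵀ * B = B₂ := by
      rw [hB, Matrix.mul_add, mul_vecMulVec, hZu, ← Matrix.mul_assoc, hZ, Matrix.one_mul]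
      simp
    set ρ := euclNorm (Nᵀ *ᵥ b) with hρ
    have hρpos : 0 < ρ := euclNorm_pos hb
    have hmin := minNorm_eq u hu Z hZu hdec B (by rw [hZB]; exact hB₂) N (by rw [hZB]; exact hN2)
      (by rw [hZB]; exact hN3) (by rw [hBu]; exact hb) Δ
    rw [hBu] at hmin
    set e : Fin d → ℝ := ρ⁻¹ • (N *ᵥ (Nᵀ *ᵥ b)) with he
    have hee : e ⬝ᵥ e = 1 := by
      have h1 : (N *ᵥ (Nᵀ *ᵥ b)) ⬝ᵥ (N *ᵥ (Nᵀ *ᵥ b)) = ρ ^ 2 := by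
        rw [hρ, euclNorm_sq, dotProduct_mulVec, ← mulVec_transpose, mulVec_mulVec _ Nᵀ N, hN1,
          one_mulVec]
      rw [he, smul_dotProduct, dotProduct_smul, h1, smul_eq_mul, smul_eq_mul]
      field_simp
    have hres : ∀ C : Fin m → Fin d → ℝ,
        euclNorm (minNormImage (Δ • u) B C) = Δ / ρ * euclNorm (of C *ᵥ e) := by
      intro C
      rw [← euclNorm_smul _ (by positivity), ← mulVec_smul, he, smul_smul]
      have : Δ / ρ * ρ⁻¹ = Δ / ρ ^ 2 := by field_simp
      rw [this, ← hmin]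
      rfl
    simp_rw [hres]
    have hmC : Measurable fun C : Fin m → Fin d → ℝ => of C *ᵥ e := by
      refine measurable_pi_lambda _ fun i => ?_
      change Measurable fun C : Fin m → Fin d → ℝ => ∑ k, C i k * e k
      fun_prop
    rw [← map_mulVec_stdM (m := m) e hee, Measure.map_map measurable_euclNorm hmC,
      Measure.map_apply (measurable_euclNorm.comp hmC)]
    · rfl
    · exact (measurable_const_mul (Δ / ρ)) hS
  rw [lintegral_congr_ae ((ae_stdG_ne_zero (by omega) N hN1).mono hpt),
    lintegral_map _ measurable_euclNorm, ← map_stdG_of_isometry N hN1, lintegral_map _ (by fun_prop)]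
  all_goals
    have hm0 : Measurable fun t : ℝ => ((stdG (Fin m)).map euclNorm) {s | Δ / t * s ∈ S} := by
      have : IsProbabilityMeasure ((stdG (Fin m)).map euclNorm) :=
        Measure.isProbabilityMeasure_map measurable_euclNorm.aemeasurable
      have : Measurable fun p : ℝ × ℝ => Δ / p.1 * p.2 := by fun_prop
      exact measurable_measure_prodMk_left (this hS)
  · exact hm0.comp measurable_euclNorm
  · exact hm0

/-! ### The density of the norm of `w` -/

/-- The law of `‖w(A)‖` has density
`h(ŵ) = (2Γ((m+n)/2)/(Γ(m/2)Γ(n/2))) · (ŵ^{m−1}/Δ^m) · (1+ŵ²/Δ²)^{−(m+n)/2}` for `ŵ > 0`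
(and `0` for `ŵ ≤ 0`) with respect to Lebesgue measure on `ℝ`. -/
theorem stmt12 (D d d_e : ℕ) (h1 : 1 ≤ d_e) (h2 : d_e ≤ d) (h3 : d_e < D)
    (U : Matrix (Fin D) (Fin d_e) ℝ) (V : Matrix (Fin D) (Fin (D - d_e)) ℝ)
    (hU : Uᵀ * U = 1) (hV : Vᵀ * V = 1) (hUV : Uᵀ * V = 0)
    (p xstar : Fin D → ℝ)
    (zstar : Fin d_e → ℝ) (hz : zstar = Uᵀ.mulVec (xstar - p)) (hz0 : zstar ≠ 0)
    (m n : ℕ) (hm : m = D - d_e) (hn : n = d - d_e + 1)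
    (Δ : ℝ) (hΔ : Δ = euclNorm zstar)
    (w : (Fin D → Fin d → ℝ) → (Fin (D - d_e) → ℝ))
    (hw : w = fun A => Vᵀ.mulVec ((Matrix.of A).mulVec
      ((Uᵀ * Matrix.of A)ᵀ.mulVec
        (((Uᵀ * Matrix.of A) * (Uᵀ * Matrix.of A)ᵀ)⁻¹.mulVec zstar)))) :
    (gaussMatrix D d).map (fun A => euclNorm (w A)) =
      (volume : Measure ℝ).withDensity (fun what =>
        if 0 < what then
          ENNReal.ofReal
            ((2 * Real.Gamma (((m : ℝ) + n) / 2) /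
                (Real.Gamma ((m : ℝ) / 2) * Real.Gamma ((n : ℝ) / 2))) *
              (what ^ (m - 1) / Δ ^ m) *
              (1 + what ^ 2 / Δ ^ 2) ^ (-(((m : ℝ) + n) / 2)))
        else 0) := by
  have hΔpos : 0 < Δ := hΔ ▸ euclNorm_pos hz0
  obtain ⟨u, hu⟩ : ∃ u, u = Δ⁻¹ • zstar := ⟨_, rfl⟩
  have hzu : zstar = Δ • u := by rw [hu, smul_smul, mul_inv_cancel₀ hΔpos.ne', one_smul]
  have huu : u ⬝ᵥ u = 1 := by
    rw [hu, smul_dotProduct, dotProduct_smul, ← euclNorm_sq, ← hΔ, smul_eq_mul, smul_eq_mul]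
    field_simp
  have hu0 : u ≠ 0 := by rintro rfl; simp at huu
  -- The kernel of the row `uᵀ` provides the complement `Z` of `u` in `ℝ^{d_e}`.
  obtain ⟨Z, hZ, hZu', hZp⟩ := exists_kernel_basis (replicateRow (Fin 1) u)
    (linearIndependent_unique_iff.2 hu0)
  have huZ : u ᵥ* Z = 0 := by
    ext j
    exact congrFun (congrFun hZu' 0) j
  have hZu : Zᵀ *ᵥ u = 0 := by rw [mulVec_transpose, huZ]
  have hdec : ∀ c, c = (u ⬝ᵥ c) • u + Z *ᵥ (Zᵀ *ᵥ c) := by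
    intro c
    have := hZp (c - (u ⬝ᵥ c) • u) (by
      ext i
      change u ⬝ᵥ _ = 0
      rw [dotProduct_sub, dotProduct_smul, huu, smul_eq_mul, mul_one, sub_self])
    rw [mulVec_sub, mulVec_smul, hZu, smul_zero, sub_zero] at this
    rw [this]; abel
  have hwres : ∀ A, w A = minNormImage zstar (of.symm (Uᵀ * of A)) (of.symm (Vᵀ * of A)) := by
    intro A
    rw [hw, minNormImage]
    simp only [Equiv.apply_symm_apply, mulVec_mulVec, Matrix.mul_assoc]
  have hmE : Measurable fun p : (Fin d_e → Fin d → ℝ) × (Fin (D - d_e) → Fin d → ℝ) =>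
      euclNorm (minNormImage zstar p.1 p.2) := measurable_euclNorm.comp (measurable_minNormImage _)
  have hmUV : Measurable fun A : Fin D → Fin d → ℝ =>
      ((of.symm (Uᵀ * of A) : Fin d_e → Fin d → ℝ),
        (of.symm (Vᵀ * of A) : Fin (D - d_e) → Fin d → ℝ)) :=
    (measurable_of_symm_mul _).prodMk (measurable_of_symm_mul _)
  have step1 : (gaussMatrix D d).map (fun A => euclNorm (w A)) =
      ((stdM (Fin d_e) (Fin d)).prod (stdM (Fin (D - d_e)) (Fin d))).map
        (fun p => euclNorm (minNormImage zstar p.1 p.2)) := by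
    rw [← map_stdM_prod U V hU hV hUV, Measure.map_map hmE hmUV]
    congr 1
    ext A
    simp only [hwres, Function.comp]
  -- A Gaussian `d_e × d` matrix is rebuilt from its independent components along `Z` and `u`.
  have hminv : Measurable fun p : (Fin (d_e - 1) → Fin d → ℝ) × (Fin d → ℝ) =>
      (of.symm (vecMulVec u p.2 + Z * of p.1) : Fin d_e → Fin d → ℝ) := by
    refine measurable_pi_lambda _ fun i => measurable_pi_lambda _ fun j => ?_
    change Measurable fun p : (Fin (d_e - 1) → Fin d → ℝ) × (Fin d → ℝ) =>
      u i * p.2 j + ∑ k, Z i k * p.1 k j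
    fun_prop
  have step2 : ((stdM (Fin (d_e - 1)) (Fin d)).prod (stdG (Fin d))).map
      (fun p => (of.symm (vecMulVec u p.2 + Z * of p.1) : Fin d_e → Fin d → ℝ)) =
      stdM (Fin d_e) (Fin d) := by
    have h := map_stdM_prod (ν := Fin d) Z (replicateCol Unit u) hZ (by
      ext i j
      simpa [Matrix.mul_apply, dotProduct] using huu) (by
      ext i j
      exact congrFun hZu i)
    have hmp := (MeasurePreserving.id (stdM (Fin (d_e - 1)) (Fin d))).prod
      (measurePreserving_eval (fun _ : Unit => stdG (Fin d)) ())
    rw [← hmp.map_eq, ← h, Measure.map_map hmp.measurable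
      ((measurable_of_symm_mul _).prodMk (measurable_of_symm_mul _)),
      Measure.map_map hminv (hmp.measurable.comp
      ((measurable_of_symm_mul _).prodMk (measurable_of_symm_mul _)))]
    convert Measure.map_id using 2
    ext A i j
    refine Eq.trans ?_ (congrFun (hdec (fun i => A i j)) i).symm
    change u i * (u ⬝ᵥ fun i => A i j) + (Z *ᵥ (Zᵀ *ᵥ fun i => A i j)) i = _
    simp [mul_comm]
  rw [step1]
  ext S hS
  have hSm := hmE hS
  have hmF : Measurable fun p : (Fin (d_e - 1) → Fin d → ℝ) × (Fin d → ℝ) =>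
      stdM (Fin (D - d_e)) (Fin d) (Prod.mk (of.symm (vecMulVec u p.2 + Z * of p.1)) ⁻¹'
        ((fun p => euclNorm (minNormImage zstar p.1 p.2)) ⁻¹' S)) :=
    (measurable_measure_prodMk_left hSm).comp hminv
  rw [Measure.map_apply hmE hS, Measure.prod_apply hSm, ← step2,
    lintegral_map (measurable_measure_prodMk_left hSm) hminv,
    lintegral_prod _ hmF.aemeasurable]
  have hae : ∀ᵐ B₂ ∂(stdM (Fin (d_e - 1)) (Fin d)),
      ∫⁻ b, stdM (Fin (D - d_e)) (Fin d) (Prod.mk (of.symm (vecMulVec u b + Z * of B₂)) ⁻¹'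
        ((fun p => euclNorm (minNormImage zstar p.1 p.2)) ⁻¹' S)) ∂(stdG (Fin d)) =
      (volume.withDensity fun r => if 0 < r then ENNReal.ofReal (ratioDens m n Δ r) else 0) S := by
    filter_upwards [ae_linearIndependent d (d_e - 1) (by omega)] with B₂ hB₂
    have := lintegral_minNormImage (m := D - d_e) (n := n) (d := d) (by omega) (by omega) u huu
      Z hZ hZu hdec Δ hΔpos S hS B₂ hB₂
    rw [← hzu] at this
    rw [← map_ratio_chi m n (by omega) (by omega) Δ hΔpos S hS, hm]
    exact this
  rw [lintegral_congr_ae hae, lintegral_const, measure_univ, mul_one]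
  rfl
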